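/- (Isomorphism criterion, Lemma 3.) Let d ≥ 1 and for j = 1, 2 let (x_j, y_j, ε_j) be a triple consisting of permutations x_j, y_j of I_d and an odd sign function ε_j : Î_d → {±1}, with associated maps 𝐱_j, 𝐲_j : Î_d → Î_d given by 𝐱_j(i) = x_j^{sign(i)}(i) and 𝐲_j(i) = ε_j(i) · y_j^{ε_j(i)}(i) · ε_j(y_j^{ε_j(i)}(i)). Let σ be an odd bijection of Î_d, with σ̄(i) = |σ(i)| and δ_σ(i) = sign(σ(i)) for i ∈ I_d. Then σ(𝐱_1(i)) = 𝐱_2(σ(i)) and σ(𝐲_1(i)) = 𝐲_2(σ(i)) hold for all i ∈ Î_d if and only if the following four conditions hold for all i ∈ I_d: (1) δ_σ(x_1(i)) = δ_σ(i); (2) x_2(σ̄(i)) = σ̄(x_1^{δ_σ(i)}(i)); (3) η(i) · η(y_2(i)) = 1, where η(i) := δ_σ(σ̄^{−1}(i)) · ε_1(σ̄^{−1}(i)) · ε_2(i); (4) y_2(σ̄(i)) = σ̄(y_1^{δ_σ(i) · ε_1(i) · ε_2(σ̄(i))}(i)). -/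

import Mathlib

/-- `Î_d`: the set of integers `i` with `1 ≤ |i| ≤ d`. -/
def IdxHat (d : ℤ) : Set ℤ := {i : ℤ | 1 ≤ |i| ∧ |i| ≤ d}

/-- `x^s(i)` for positive `i`: `x i` if `s = 1`, `x⁻¹ i` if `s = -1`. -/
def pApp (x : Equiv.Perm ℤ) (s i : ℤ) : ℤ := if s = 1 then x i else x.symm i

/-- The odd extension of `x^s` to `Î_d`. -/
def sApp (x : Equiv.Perm ℤ) (s i : ℤ) : ℤ :=
  if 0 < i then pApp x s i else -pApp x s (-i)

/-- `𝐱(i) = x^{sign i}(i)`. -/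
def bX (x : Equiv.Perm ℤ) (i : ℤ) : ℤ := if 0 < i then x i else -(x.symm (-i))

/-- `𝐲(i) = ε(i) · y^{ε(i)}(i) · ε(y^{ε(i)}(i))`. -/
def bY (y : Equiv.Perm ℤ) (ε : ℤ → ℤ) (i : ℤ) : ℤ :=
  ε i * sApp y (ε i) i * ε (sApp y (ε i) i)

/-!
Conjugating by the odd involution `i ↦ i · ε(|i|)` turns `𝐲` into the map `𝐱` built from `y`. Hence
`σ` intertwines `𝐲₁, 𝐲₂` iff the odd map `f = E₂ ∘ σ ∘ E₁` (with `E_j` the involution of `ε_j`)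
intertwines two maps of type `𝐱`, and one criterion serves for both halves. Writing a nonzero
integer as `u · i` with `u = ±1` and `i > 0`, that criterion says that `sign ∘ f` is
`x₁`-invariant and `x₂(|f i|) = |f(x₁^s i)|` with `s = sign (f i)`.

For `f = E₂ ∘ σ ∘ E₁` one has `|f i| = σ̄(i)` and `sign (f i) = η(σ̄(i))`. Condition (3) is then
invariance of the sign under `i ↦ y₁^{sign (f i)}(i)` instead of under `y₁`; on a finite set the
two are equivalent, because an injection of the finite set `{f > 0}` into itself is onto.
-/

lemma apply_unit_mul_of_odd {f : ℤ → ℤ} (hf : Function.Odd f) {u : ℤ} (hu : IsUnit u) (i : ℤ) :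
    f (u * i) = u * f i := by
  rcases Int.isUnit_iff.1 hu with rfl | rfl <;> simp [hf i]

lemma abs_unit_mul {u : ℤ} (hu : IsUnit u) (i : ℤ) : |u * i| = |i| := by
  rw [abs_mul, Int.isUnit_iff_abs_eq.1 hu, one_mul]

lemma isUnit_sign {i : ℤ} (hi : i ≠ 0) : IsUnit i.sign :=
  Int.isUnit_iff_abs_eq.2 (by rw [Int.abs_sign_of_ne_zero hi])

lemma sign_unit_mul {u p : ℤ} (hu : IsUnit u) (hp : 0 < p) : (u * p).sign = u := by
  rcases Int.isUnit_iff.1 hu with rfl | rfl <;> simp [Int.sign_eq_one_of_pos hp]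

lemma unit_mul_eq_one_iff {u v : ℤ} (hu : IsUnit u) (hv : IsUnit v) : u * v = 1 ↔ v = u := by
  rcases Int.isUnit_iff.1 hu with rfl | rfl <;> rcases Int.isUnit_iff.1 hv with rfl | rfl <;> simp

lemma pApp_pApp_neg {x : Equiv.Perm ℤ} {u : ℤ} (hu : IsUnit u) (i : ℤ) :
    pApp x u (pApp x (-u) i) = i := by
  rcases Int.isUnit_iff.1 hu with rfl | rfl <;> simp [pApp]

lemma bX_unit_mul (x : Equiv.Perm ℤ) {u i : ℤ} (hu : IsUnit u) (hi : 0 < i) :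
    bX x (u * i) = u * pApp x u i := by
  rcases Int.isUnit_iff.1 hu with rfl | rfl <;> simp [bX, pApp, hi, hi.le]

lemma sApp_unit_mul (x : Equiv.Perm ℤ) (s : ℤ) {u i : ℤ} (hu : IsUnit u) (hi : 0 < i) :
    sApp x s (u * i) = u * pApp x s i := by
  rcases Int.isUnit_iff.1 hu with rfl | rfl <;> simp [sApp, hi, hi.le]

lemma pApp_mem {S : Set ℤ} {x : Equiv.Perm ℤ} (hx : Set.BijOn x S S) (s : ℤ) {i : ℤ}
    (hi : i ∈ S) : pApp x s i ∈ S := by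
  unfold pApp
  split_ifs
  · exact hx.mapsTo hi
  · obtain ⟨j, hj, rfl⟩ := hx.surjOn hi
    simpa using hj

lemma sign_pApp_eq {S : Set ℤ} {x : Equiv.Perm ℤ} (hx : Set.BijOn x S S) {f : ℤ → ℤ}
    (h : ∀ i ∈ S, (f (x i)).sign = (f i).sign) (s : ℤ) {i : ℤ} (hi : i ∈ S) :
    (f (pApp x s i)).sign = (f i).sign := by
  have hk := pApp_mem hx s hi
  unfold pApp at hk ⊢
  split_ifs at hk ⊢
  · exact h i hi
  · simpa using (h _ hk).symm

lemma sign_apply_eq_iff_sign_pApp_eq {S : Set ℤ} (hfin : S.Finite) {x : Equiv.Perm ℤ}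
    (hx : Set.BijOn x S S) {f : ℤ → ℤ} (hf : ∀ i ∈ S, f i ≠ 0) :
    (∀ i ∈ S, (f (x i)).sign = (f i).sign) ↔
      ∀ i ∈ S, (f (pApp x (f i).sign i)).sign = (f i).sign := by
  refine ⟨fun h i hi => sign_pApp_eq hx h _ hi, fun h i hi => ?_⟩
  -- `x` maps the finite set where `f` is positive injectively into itself, hence so does `x⁻¹`.
  let P : Set ℤ := {i ∈ S | (f i).sign = 1}
  have : Finite P := hfin.subset (Set.sep_subset _ _)
  have hP : Set.MapsTo x P P := fun j ⟨hj, hj1⟩ =>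
    ⟨hx.mapsTo hj, by simpa [pApp, hj1] using h j hj⟩
  have hiff : (f (x i)).sign = 1 ↔ (f i).sign = 1 := by
    refine ⟨fun hxi => ?_, fun hi1 => (hP ⟨hi, hi1⟩).2⟩
    simpa using (Equiv.Perm.perm_symm_mapsTo_of_mapsTo x hP ⟨hx.mapsTo hi, hxi⟩).2
  have hs := Int.isUnit_iff.1 (isUnit_sign (hf i hi))
  have ht := Int.isUnit_iff.1 (isUnit_sign (hf _ (hx.mapsTo hi)))
  omega

lemma forall_mem_preimage_abs {S : Set ℤ} (hS : ∀ i ∈ S, 0 < i) {p : ℤ → Prop} :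
    (∀ i ∈ abs ⁻¹' S, p i) ↔ ∀ i ∈ S, ∀ u : ℤ, IsUnit u → p (u * i) := by
  constructor
  · intro h i hi u hu
    exact h _ (by rwa [Set.mem_preimage, abs_unit_mul hu, abs_of_pos (hS i hi)])
  · intro h i hi
    rw [← Int.sign_mul_abs i]
    exact h _ hi _ (isUnit_sign (abs_pos.1 (hS _ hi)))

section Semiconj

variable {S : Set ℤ} {x₁ x₂ : Equiv.Perm ℤ} {f : ℤ → ℤ}

lemma semiconj_bX_iff_pApp (hS : ∀ i ∈ S, 0 < i) (hodd : Function.Odd f)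
    (hf : ∀ i ∈ S, f i ≠ 0) :
    (∀ i ∈ abs ⁻¹' S, f (bX x₁ i) = bX x₂ (f i)) ↔
      ∀ i ∈ S, ∀ u : ℤ, IsUnit u →
        f (pApp x₁ u i) = (f i).sign * pApp x₂ (u * (f i).sign) |f i| := by
  rw [forall_mem_preimage_abs hS]
  refine forall₂_congr fun i hi => forall₂_congr fun u hu => ?_
  have hs := isUnit_sign (hf i hi)
  have hleft : f (bX x₁ (u * i)) = u * f (pApp x₁ u i) := by
    rw [bX_unit_mul x₁ hu (hS i hi), apply_unit_mul_of_odd hodd hu]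
  have hright : bX x₂ (f (u * i)) = u * ((f i).sign * pApp x₂ (u * (f i).sign) |f i|) := by
    rw [apply_unit_mul_of_odd hodd hu, ← mul_assoc, ← bX_unit_mul x₂ (hu.mul hs)
      (abs_pos.2 (hf i hi)), mul_assoc, Int.sign_mul_abs]
  rw [hleft, hright, mul_right_inj' hu.ne_zero]

lemma semiconj_bX_iff (hS : ∀ i ∈ S, 0 < i) (hx₁ : Set.BijOn x₁ S S) (hx₂ : Set.BijOn x₂ S S)
    (hodd : Function.Odd f) (hf : ∀ i ∈ S, |f i| ∈ S) :
    (∀ i ∈ abs ⁻¹' S, f (bX x₁ i) = bX x₂ (f i)) ↔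
      ∀ i ∈ S, (f (x₁ i)).sign = (f i).sign ∧ x₂ |f i| = |f (pApp x₁ (f i).sign i)| := by
  have hf0 : ∀ i ∈ S, f i ≠ 0 := fun i hi => abs_pos.1 (hS _ (hf i hi))
  rw [semiconj_bX_iff_pApp hS hodd hf0]
  constructor
  · intro h i hi
    have hs := isUnit_sign (hf0 i hi)
    have hpos : ∀ s, 0 < pApp x₂ s |f i| := fun s => hS _ (pApp_mem hx₂ s (hf i hi))
    constructor
    · have h1 : f (x₁ i) = _ := h i hi 1 isUnit_one
      rw [h1, sign_unit_mul hs (hpos _)]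
    · rw [h i hi _ hs, abs_unit_mul hs, abs_of_pos (hpos _), Int.isUnit_mul_self hs, pApp,
        if_pos rfl]
  · intro h i hi u hu
    have hs := isUnit_sign (hf0 i hi)
    have hsign := sign_pApp_eq hx₁ (fun j hj => (h j hj).1) u hi
    suffices habs : |f (pApp x₁ u i)| = pApp x₂ (u * (f i).sign) |f i| by
      rw [← habs, ← hsign, Int.sign_mul_abs]
    rcases Int.isUnit_eq_or_eq_neg hu hs with rfl | rfl
    · rw [Int.isUnit_mul_self hs, pApp.eq_def x₂, if_pos rfl, (h i hi).2]
    · -- Here the condition is read backwards, from `x₁^{-s}(i)` to `i` with `s = sign (f i)`.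
      have hback := (h _ (pApp_mem hx₁ (-(f i).sign) hi)).2
      rw [hsign, pApp_pApp_neg hs] at hback
      rw [neg_mul, Int.isUnit_mul_self hs, ← hback]
      simp [pApp]

end Semiconj

lemma semiconj_conj_iff {α β : Type*} {A E₁ : α → α} {B E₂ : β → β} {σ : α → β}
    {T : Set α} {U : Set β} (hA : Set.MapsTo A T T) (hB : Set.MapsTo B U U)
    (hσ : Set.MapsTo σ T U) (hE₁ : Set.MapsTo E₁ T T) (hE₂ : Set.MapsTo E₂ U U)
    (hinv₁ : Set.LeftInvOn E₁ E₁ T) (hinv₂ : Set.LeftInvOn E₂ E₂ U) :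
    (∀ i ∈ T, σ (E₁ (A (E₁ i))) = E₂ (B (E₂ (σ i)))) ↔
      ∀ i ∈ T, E₂ (σ (E₁ (A i))) = B (E₂ (σ (E₁ i))) := by
  constructor
  · intro h i hi
    have hi' := h _ (hE₁ hi)
    rw [hinv₁ hi] at hi'
    rw [hi', hinv₂ (hB (hE₂ (hσ (hE₁ hi))))]
  · intro h i hi
    have hi' := h _ (hE₁ hi)
    rw [hinv₁ hi] at hi'
    rw [← hi', hinv₂ (hσ (hE₁ (hA (hE₁ hi))))]

/-- The odd map `i ↦ i · ε(|i|)`, an involution of `Î_d` when `ε` takes values `±1`. Conjugating by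
it turns `𝐲` into the map `bX y` of the same form as `𝐱`. -/
def signTwist (ε : ℤ → ℤ) (i : ℤ) : ℤ := i * ε |i|

/-- The sign `δ_σ(i) · ε₁(i) · ε₂(σ̄(i))`, that is `η(σ̄(i))`; it is the exponent of `y₁` in
condition (4). -/
def twistedSign (σ ε₁ ε₂ : ℤ → ℤ) (i : ℤ) : ℤ := (σ i).sign * ε₁ i * ε₂ |σ i|

lemma signTwist_odd (ε : ℤ → ℤ) : Function.Odd (signTwist ε) := fun i => by simp [signTwist]

lemma signTwist_of_pos (ε : ℤ → ℤ) {i : ℤ} (hi : 0 < i) : signTwist ε i = ε i * i := by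
  rw [signTwist, abs_of_pos hi, mul_comm]

section SignTwist

variable {S : Set ℤ} {ε : ℤ → ℤ}

lemma abs_signTwist (hε : ∀ i ∈ S, IsUnit (ε i)) {i : ℤ} (hi : |i| ∈ S) :
    |signTwist ε i| = |i| := by
  rw [signTwist, mul_comm, abs_unit_mul (hε _ hi)]

lemma mapsTo_signTwist (hε : ∀ i ∈ S, IsUnit (ε i)) :
    Set.MapsTo (signTwist ε) (abs ⁻¹' S) (abs ⁻¹' S) := fun i hi => by
  rwa [Set.mem_preimage, abs_signTwist hε hi]

lemma leftInvOn_signTwist (hε : ∀ i ∈ S, IsUnit (ε i)) :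
    Set.LeftInvOn (signTwist ε) (signTwist ε) (abs ⁻¹' S) := fun i hi => by
  rw [signTwist, abs_signTwist hε hi, signTwist, mul_assoc, Int.isUnit_mul_self (hε _ hi), mul_one]

lemma mapsTo_bX (hS : ∀ i ∈ S, 0 < i) {x : Equiv.Perm ℤ} (hx : Set.BijOn x S S) :
    Set.MapsTo (bX x) (abs ⁻¹' S) (abs ⁻¹' S) :=
  (forall_mem_preimage_abs hS).2 fun i hi u hu => by
    have hp := pApp_mem hx u hi
    rwa [Set.mem_preimage, bX_unit_mul x hu (hS i hi), abs_unit_mul hu, abs_of_pos (hS _ hp)]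

lemma bY_eq_signTwist_bX_signTwist (hS : ∀ i ∈ S, 0 < i) {y : Equiv.Perm ℤ}
    (hy : Set.BijOn y S S) (hodd : Function.Odd ε) (hε : ∀ i ∈ S, IsUnit (ε i)) :
    ∀ i ∈ abs ⁻¹' S, bY y ε i = signTwist ε (bX y (signTwist ε i)) := by
  refine (forall_mem_preimage_abs hS).2 fun i hi u hu => ?_
  have hv : IsUnit (u * ε i) := hu.mul (hε i hi)
  set p := pApp y (u * ε i) i
  have hp0 : 0 < p := hS _ (pApp_mem hy _ hi)
  have hsApp : sApp y (ε (u * i)) (u * i) = u * p := by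
    rw [sApp_unit_mul y _ hu (hS i hi), apply_unit_mul_of_odd hodd hu]
  have htwist : bX y (signTwist ε (u * i)) = u * ε i * p := by
    rw [apply_unit_mul_of_odd (signTwist_odd ε) hu, signTwist_of_pos ε (hS i hi), ← mul_assoc,
      bX_unit_mul y hv (hS i hi)]
  calc bY y ε (u * i)
      = u * ε i * (u * p) * (u * ε p) := by
        rw [bY, hsApp, apply_unit_mul_of_odd hodd hu, apply_unit_mul_of_odd hodd hu]
    _ = (u * u) * (u * ε i) * (ε p * p) := by ring
    _ = signTwist ε (bX y (signTwist ε (u * i))) := by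
        rw [Int.isUnit_mul_self hu, one_mul, htwist,
          apply_unit_mul_of_odd (signTwist_odd ε) hv, signTwist_of_pos ε hp0]

end SignTwist

section TwistedSign

variable {S : Set ℤ} {y₁ y₂ : Equiv.Perm ℤ} {ε₁ ε₂ σ : ℤ → ℤ}

lemma isUnit_twistedSign (hS : ∀ i ∈ S, 0 < i) (hε₁ : ∀ i ∈ S, IsUnit (ε₁ i))
    (hε₂ : ∀ i ∈ S, IsUnit (ε₂ i)) (hσ : ∀ i ∈ S, |σ i| ∈ S) {i : ℤ} (hi : i ∈ S) :
    IsUnit (twistedSign σ ε₁ ε₂ i) :=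
  ((isUnit_sign (abs_pos.1 (hS _ (hσ i hi)))).mul (hε₁ i hi)).mul (hε₂ _ (hσ i hi))

lemma signTwist_conj_apply (hS : ∀ i ∈ S, 0 < i) (hε₁ : ∀ i ∈ S, IsUnit (ε₁ i))
    (hσodd : Function.Odd σ) {i : ℤ} (hi : i ∈ S) :
    signTwist ε₂ (σ (signTwist ε₁ i)) = twistedSign σ ε₁ ε₂ i * |σ i| := by
  rw [signTwist_of_pos ε₁ (hS i hi), apply_unit_mul_of_odd hσodd (hε₁ i hi),
    apply_unit_mul_of_odd (signTwist_odd ε₂) (hε₁ i hi), signTwist, twistedSign]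
  nth_rewrite 1 [← Int.sign_mul_abs (σ i)]
  ring

lemma abs_signTwist_conj (hS : ∀ i ∈ S, 0 < i) (hε₁ : ∀ i ∈ S, IsUnit (ε₁ i))
    (hε₂ : ∀ i ∈ S, IsUnit (ε₂ i)) (hσodd : Function.Odd σ) (hσ : ∀ i ∈ S, |σ i| ∈ S) {i : ℤ}
    (hi : i ∈ S) : |signTwist ε₂ (σ (signTwist ε₁ i))| = |σ i| := by
  rw [signTwist_conj_apply hS hε₁ hσodd hi,
    abs_unit_mul (isUnit_twistedSign hS hε₁ hε₂ hσ hi), abs_abs]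

lemma sign_signTwist_conj (hS : ∀ i ∈ S, 0 < i) (hε₁ : ∀ i ∈ S, IsUnit (ε₁ i))
    (hε₂ : ∀ i ∈ S, IsUnit (ε₂ i)) (hσodd : Function.Odd σ) (hσ : ∀ i ∈ S, |σ i| ∈ S) {i : ℤ}
    (hi : i ∈ S) : (signTwist ε₂ (σ (signTwist ε₁ i))).sign = twistedSign σ ε₁ ε₂ i := by
  rw [signTwist_conj_apply hS hε₁ hσodd hi,
    sign_unit_mul (isUnit_twistedSign hS hε₁ hε₂ hσ hi) (hS _ (hσ i hi))]

lemma semiconj_bY_iff (hS : ∀ i ∈ S, 0 < i) (hfin : S.Finite)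
    (hy₁ : Set.BijOn y₁ S S) (hy₂ : Set.BijOn y₂ S S)
    (hε₁odd : Function.Odd ε₁) (hε₁ : ∀ i ∈ S, IsUnit (ε₁ i))
    (hε₂odd : Function.Odd ε₂) (hε₂ : ∀ i ∈ S, IsUnit (ε₂ i))
    (hσodd : Function.Odd σ) (hσ : Set.MapsTo σ (abs ⁻¹' S) (abs ⁻¹' S)) :
    (∀ i ∈ abs ⁻¹' S, σ (bY y₁ ε₁ i) = bY y₂ ε₂ (σ i)) ↔
      ∀ i ∈ S,
        twistedSign σ ε₁ ε₂ (pApp y₁ (twistedSign σ ε₁ ε₂ i) i) = twistedSign σ ε₁ ε₂ i ∧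
        y₂ |σ i| = |σ (pApp y₁ (twistedSign σ ε₁ ε₂ i) i)| := by
  have hσS : ∀ i ∈ S, |σ i| ∈ S := fun i hi => hσ (by rwa [Set.mem_preimage, abs_of_pos (hS i hi)])
  let f : ℤ → ℤ := fun i => signTwist ε₂ (σ (signTwist ε₁ i))
  have hfodd : Function.Odd f := fun i => by
    simp only [f, signTwist_odd ε₁ i, hσodd _, signTwist_odd ε₂ _]
  have habs : ∀ i ∈ S, |f i| = |σ i| := fun _ => abs_signTwist_conj hS hε₁ hε₂ hσodd hσS
  have hsign : ∀ i ∈ S, (f i).sign = twistedSign σ ε₁ ε₂ i :=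
    fun _ => sign_signTwist_conj hS hε₁ hε₂ hσodd hσS
  have hfS : ∀ i ∈ S, |f i| ∈ S := fun i hi => by rw [habs i hi]; exact hσS i hi
  calc (∀ i ∈ abs ⁻¹' S, σ (bY y₁ ε₁ i) = bY y₂ ε₂ (σ i))
      ↔ ∀ i ∈ abs ⁻¹' S, σ (signTwist ε₁ (bX y₁ (signTwist ε₁ i))) =
          signTwist ε₂ (bX y₂ (signTwist ε₂ (σ i))) := forall₂_congr fun i hi => by
        rw [bY_eq_signTwist_bX_signTwist hS hy₁ hε₁odd hε₁ i hi,
          bY_eq_signTwist_bX_signTwist hS hy₂ hε₂odd hε₂ _ (hσ hi)]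
    _ ↔ ∀ i ∈ abs ⁻¹' S, f (bX y₁ i) = bX y₂ (f i) :=
        semiconj_conj_iff (mapsTo_bX hS hy₁) (mapsTo_bX hS hy₂) hσ (mapsTo_signTwist hε₁)
          (mapsTo_signTwist hε₂) (leftInvOn_signTwist hε₁) (leftInvOn_signTwist hε₂)
    _ ↔ ∀ i ∈ S, (f (pApp y₁ (f i).sign i)).sign = (f i).sign ∧
          y₂ |f i| = |f (pApp y₁ (f i).sign i)| := by
        rw [semiconj_bX_iff hS hy₁ hy₂ hfodd hfS, forall₂_and, forall₂_and,
          sign_apply_eq_iff_sign_pApp_eq hfin hy₁ fun i hi => abs_pos.1 (hS _ (hfS i hi))]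
    _ ↔ _ := forall₂_congr fun i hi => by
        have hk := pApp_mem hy₁ (twistedSign σ ε₁ ε₂ i) hi
        rw [hsign i hi, habs i hi, hsign _ hk, habs _ hk]

end TwistedSign

lemma surjOn_abs_of_odd {S : Set ℤ} (hS : ∀ i ∈ S, 0 < i) {σ : ℤ → ℤ} (hσodd : Function.Odd σ)
    (hσ : Set.SurjOn σ (abs ⁻¹' S) (abs ⁻¹' S)) : Set.SurjOn (fun i => |σ i|) S S := by
  intro i hi
  have habs : |i| = i := abs_of_pos (hS i hi)
  obtain ⟨j, hj, rfl⟩ := hσ (show i ∈ abs ⁻¹' S by rwa [Set.mem_preimage, habs])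
  refine ⟨|j|, hj, ?_⟩
  rcases abs_choice j with h | h <;> simp only [h, hσodd j, abs_neg, habs]

lemma twistedSign_conditions_iff {S : Set ℤ} {y₁ y₂ : Equiv.Perm ℤ} {τ η σ : ℤ → ℤ}
    (hy₁ : Set.BijOn y₁ S S) (hτ : ∀ i ∈ S, IsUnit (τ i)) (hη : ∀ i ∈ S, η |σ i| = τ i)
    (hσ : Set.MapsTo (fun i => |σ i|) S S) (hσsurj : Set.SurjOn (fun i => |σ i|) S S) :
    (∀ i ∈ S, τ (pApp y₁ (τ i) i) = τ i ∧ y₂ |σ i| = |σ (pApp y₁ (τ i) i)|) ↔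
      ∀ i ∈ S, η i * η (y₂ i) = 1 ∧ y₂ |σ i| = |σ (pApp y₁ (τ i) i)| := by
  have hpoint : ∀ i ∈ S, y₂ |σ i| = |σ (pApp y₁ (τ i) i)| →
      (η |σ i| * η (y₂ |σ i|) = 1 ↔ τ (pApp y₁ (τ i) i) = τ i) := fun i hi h4 => by
    have hk := pApp_mem hy₁ (τ i) hi
    rw [h4, hη i hi, hη _ hk, unit_mul_eq_one_iff (hτ i hi) (hτ _ hk)]
  constructor
  · intro h i hi
    obtain ⟨j, hj, rfl⟩ := hσsurj hi
    exact ⟨(hpoint j hj (h j hj).2).2 (h j hj).1, (h _ hi).2⟩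
  · intro h i hi
    exact ⟨(hpoint i hi (h i hi).2).1 (h _ (hσ hi)).1, (h i hi).2⟩

/-- Isomorphism criterion (Lemma 3): `σ ∘ 𝐱₁ = 𝐱₂ ∘ σ` and `σ ∘ 𝐲₁ = 𝐲₂ ∘ σ` on `Î_d`
iff the four conditions (1)–(4) hold on `I_d`.  Here `σ̄ i = |σ i|`, `δ_σ i = sign (σ i)`,
`σbi` is the inverse of the permutation `σ̄` of `I_d`, and
`η i = δ_σ(σ̄⁻¹ i) · ε₁(σ̄⁻¹ i) · ε₂ i`. -/
theorem stmt5 (d : ℤ) (hd : 1 ≤ d)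
    (x₁ x₂ y₁ y₂ : Equiv.Perm ℤ)
    (hx₁ : Set.BijOn x₁ (Set.Icc 1 d) (Set.Icc 1 d))
    (hx₂ : Set.BijOn x₂ (Set.Icc 1 d) (Set.Icc 1 d))
    (hy₁ : Set.BijOn y₁ (Set.Icc 1 d) (Set.Icc 1 d))
    (hy₂ : Set.BijOn y₂ (Set.Icc 1 d) (Set.Icc 1 d))
    (ε₁ ε₂ : ℤ → ℤ)
    (hε₁odd : ∀ i : ℤ, ε₁ (-i) = -ε₁ i) (hε₁ : ∀ i ∈ IdxHat d, ε₁ i = 1 ∨ ε₁ i = -1)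
    (hε₂odd : ∀ i : ℤ, ε₂ (-i) = -ε₂ i) (hε₂ : ∀ i ∈ IdxHat d, ε₂ i = 1 ∨ ε₂ i = -1)
    (σ : Equiv.Perm ℤ) (hσ : Set.BijOn σ (IdxHat d) (IdxHat d))
    (hσodd : ∀ i : ℤ, σ (-i) = -σ i)
    (σbi : ℤ → ℤ)
    (hσbi : ∀ i ∈ Set.Icc (1:ℤ) d, σbi (|σ i|) = i ∧ |σ (σbi i)| = i) :
    (∀ i ∈ IdxHat d, σ (bX x₁ i) = bX x₂ (σ i) ∧ σ (bY y₁ ε₁ i) = bY y₂ ε₂ (σ i))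
    ↔ (∀ i ∈ Set.Icc (1:ℤ) d,
        Int.sign (σ (x₁ i)) = Int.sign (σ i)
        ∧ x₂ (|σ i|) = |σ (pApp x₁ (Int.sign (σ i)) i)|
        ∧ (Int.sign (σ (σbi i)) * ε₁ (σbi i) * ε₂ i)
            * (Int.sign (σ (σbi (y₂ i))) * ε₁ (σbi (y₂ i)) * ε₂ (y₂ i)) = 1
        ∧ y₂ (|σ i|) = |σ (pApp y₁ (Int.sign (σ i) * ε₁ i * ε₂ (|σ i|)) i)|) := by
  have hS : ∀ i ∈ Set.Icc 1 d, 0 < i := fun i hi => hi.1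
  have hmem : ∀ i ∈ Set.Icc 1 d, i ∈ IdxHat d := fun i hi => by
    rwa [← abs_of_pos (hS i hi)] at hi
  have hσS : ∀ i ∈ Set.Icc 1 d, |σ i| ∈ Set.Icc 1 d := fun i hi => hσ.mapsTo (hmem i hi)
  have hε₁S : ∀ i ∈ Set.Icc 1 d, IsUnit (ε₁ i) := fun i hi => Int.isUnit_iff.2 (hε₁ i (hmem i hi))
  have hε₂S : ∀ i ∈ Set.Icc 1 d, IsUnit (ε₂ i) := fun i hi => Int.isUnit_iff.2 (hε₂ i (hmem i hi))
  let η : ℤ → ℤ := fun i => (σ (σbi i)).sign * ε₁ (σbi i) * ε₂ i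
  have hη : ∀ i ∈ Set.Icc 1 d, η |σ i| = twistedSign σ ε₁ ε₂ i := fun i hi => by
    simp only [η, twistedSign, (hσbi i hi).1]
  have hX := semiconj_bX_iff hS hx₁ hx₂ hσodd hσS
  have hY := (semiconj_bY_iff hS (Set.finite_Icc 1 d) hy₁ hy₂ hε₁odd hε₁S hε₂odd hε₂S hσodd
    hσ.mapsTo).trans <| twistedSign_conditions_iff hy₁
      (fun _ => isUnit_twistedSign hS hε₁S hε₂S hσS) hη hσS (surjOn_abs_of_odd hS hσodd hσ.surjOn)
  exact forall₂_and.trans <| (and_congr hX hY).trans <| forall₂_and.symm.trans <|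
    forall₂_congr fun _ _ => and_assoc
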